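/- Let X be an n×p real matrix with columns X_1,…,X_p, let β* ∈ ℝ^p have support contained in a set A_0 ⊆ {1,…,p}, and let y = Xβ* + ε for some ε ∈ ℝ^n. Assume the Gram matrix X_{A_0}ᵀX_{A_0} of the columns in A_0 is invertible, and that there exists η with 0 ≤ η < 1 such that for every j ∉ A_0 and every vector τ ∈ ℝ^{A_0} with ‖τ‖_∞ ≤ 1 one has |X_jᵀ X_{A_0} (X_{A_0}ᵀ X_{A_0})^{-1} τ| ≤ η. Set λ_ε := max_{1≤j≤p} |⟨ε, X_j⟩| and let λ > 0 satisfy λ ≥ λ_ε (1+η)/(1−η). Then every minimizer β̂(λ) of the Lasso objective β ↦ (1/2)‖y − Xβ‖₂² + λ‖β‖₁ over ℝ^p satisfies β̂(λ)_j = 0 for all j ∉ A_0 (i.e., the Lasso active set at λ is contained in A_0). -/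

import Mathlib

open scoped BigOperators

noncomputable section

/-- Euclidean inner product on `Fin n → ℝ`. -/
def ip {n : ℕ} (a b : Fin n → ℝ) : ℝ := ∑ i, a i * b i

/-- Squared Euclidean norm on `Fin n → ℝ`. -/
def sqnorm {n : ℕ} (a : Fin n → ℝ) : ℝ := ∑ i, (a i) ^ 2

/-!
Let `b` be the `ℓ₁`-mass that the minimizer `β̂` puts outside `A`. The irrepresentable condition
says that the least-squares projection of each outside column onto the span of the columns in `A`
has coefficients of `ℓ₁`-norm at most `η`. Compare `β̂` with the competitor `β̂ - d` obtained by
replacing the outside part of `β̂` by the coefficients of its projection. The penalty drops by at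
least `λ (1 - η) b`. Since `X d` is orthogonal to the columns in `A`, which carry `β* - β̂ + d`, the
quadratic term changes by `⟨ε, X d⟩ - ‖X d‖² / 2`. As `‖d‖₁ ≤ (1 + η) b`, Hölder's inequality
bounds `⟨ε, X d⟩` by `λ_ε (1 + η) b ≤ λ (1 - η) b`. So minimality forces `X d = 0`, after which
nothing pays for the penalty drop, and `b = 0`.
-/

section Lasso

open Function Matrix

variable {m ι κ R G : Type*} [Fintype ι]

theorem mulVec_extend_zero [NonUnitalNonAssocSemiring R] [Fintype κ] (X : Matrix m ι R) {f : κ → ι}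
    (hf : Injective f) (c : κ → R) : X *ᵥ extend f c 0 = X.submatrix id f *ᵥ c := by
  ext i
  refine (Fintype.sum_of_injective f hf _ _ (fun k hk => ?_) fun a => ?_).symm
  · rw [extend_apply' _ _ _ hk, Pi.zero_apply, mul_zero]
  · simp [hf.extend_apply]

theorem sum_abs_indicator_add_sum_abs_indicator_compl [AddCommGroup G] [LinearOrder G]
    [IsOrderedAddMonoid G] (A : Set ι) (β : ι → G) :
    ∑ j, |A.indicator β j| + ∑ j, |Aᶜ.indicator β j| = ∑ j, |β j| := by
  rw [← Finset.sum_add_distrib]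
  refine Finset.sum_congr rfl fun j _ => ?_
  by_cases hj : j ∈ A <;> simp [hj]

theorem sum_abs_extend_zero [AddCommGroup G] [LinearOrder G] [IsOrderedAddMonoid G] [Fintype κ]
    {f : κ → ι} (hf : Injective f) (c : κ → G) :
    ∑ k, |extend f c 0 k| = ∑ a, |c a| := by
  refine (Fintype.sum_of_injective f hf _ _ (fun k hk => ?_) fun a => ?_).symm
  · rw [extend_apply' _ _ _ hk, Pi.zero_apply, abs_zero]
  · rw [hf.extend_apply]

section DotProduct

variable [Fintype m]

theorem dotProduct_mulVec_eq_zero_of_support_subset [NonUnitalSemiring R] {X : Matrix m ι R}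
    {A : Set ι} {z : m → R} {w : ι → R} (hz : ∀ a ∈ A, (z ᵥ* X) a = 0) (hw : support w ⊆ A) :
    z ⬝ᵥ X *ᵥ w = 0 := by
  rw [dotProduct_mulVec]
  refine Finset.sum_eq_zero fun j _ => ?_
  by_cases hj : j ∈ A
  · rw [hz j hj, zero_mul]
  · rw [notMem_support.mp fun h => hj (hw h), mul_zero]

theorem residual_dotProduct_mulVec [CommRing R] {X : Matrix m ι R} {A : Set ι}
    {βstar β d : ι → R} (hd : ∀ a ∈ A, ((X *ᵥ d) ᵥ* X) a = 0)
    (hA : support (βstar - (β - d)) ⊆ A) (ε : m → R) :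
    (X *ᵥ βstar + ε - X *ᵥ β) ⬝ᵥ X *ᵥ d = ε ⬝ᵥ X *ᵥ d - X *ᵥ d ⬝ᵥ X *ᵥ d := by
  have residual_eq : X *ᵥ βstar + ε - X *ᵥ β = X *ᵥ (βstar - (β - d)) + ε - X *ᵥ d := by
    simp only [mulVec_sub]
    abel
  rw [residual_eq, sub_dotProduct, add_dotProduct, dotProduct_comm (X *ᵥ (βstar - (β - d))),
    dotProduct_mulVec_eq_zero_of_support_subset hd hA, zero_add]

end DotProduct

/-- The irrepresentable condition with constant `η` for the columns of `X` indexed by `A`: every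
other column has a least-squares approximation `X *ᵥ c` by the columns in `A` whose coefficient
vector `c`, extended by zero outside `A`, has `ℓ₁`-norm at most `η`. Orthogonality of the residual
characterizes least squares, so the columns in `A` may be linearly dependent. -/
def IsIrrepresentable [Fintype m] [CommRing R] [LinearOrder R] (X : Matrix m ι R) (A : Set ι)
    (η : R) : Prop :=
  ∀ j ∉ A, ∃ c : ι → R,
    support c ⊆ A ∧ (∀ a ∈ A, ((X.col j - X *ᵥ c) ᵥ* X) a = 0) ∧ ∑ k, |c k| ≤ η

/-- The Lasso objective `β ↦ ‖y - X β‖₂² / 2 + lam ‖β‖₁`. -/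
def lassoObjective [Fintype m] [Field R] [LinearOrder R] (X : Matrix m ι R) (y : m → R) (lam : R)
    (β : ι → R) : R :=
  1 / 2 * ((y - X *ᵥ β) ⬝ᵥ (y - X *ᵥ β)) + lam * ∑ j, |β j|

section OrderedCommRing

variable [CommRing R] [LinearOrder R] [IsStrictOrderedRing R]

theorem abs_dotProduct_le_mul_sum_abs {v : ι → R} {M : R} (hv : ∀ j, |v j| ≤ M) (w : ι → R) :
    |v ⬝ᵥ w| ≤ M * ∑ j, |w j| := by
  calc |v ⬝ᵥ w| ≤ ∑ j, |v j * w j| := Finset.abs_sum_le_sum_abs _ _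
    _ ≤ ∑ j, M * |w j| := by
      gcongr with j
      rw [abs_mul]
      gcongr
      exact hv j
    _ = M * ∑ j, |w j| := (Finset.mul_sum ..).symm

theorem sum_abs_le_of_forall_abs_dotProduct_le {v : ι → R} {M : R}
    (hv : ∀ τ : ι → R, (∀ j, |τ j| ≤ 1) → |v ⬝ᵥ τ| ≤ M) : ∑ j, |v j| ≤ M := by
  have abs_sign_le_one : ∀ j, |(SignType.sign (v j) : R)| ≤ 1 := fun j => by
    rcases SignType.sign (v j) with _ | _ | _ <;> simp
  calc ∑ j, |v j| = v ⬝ᵥ fun j => (SignType.sign (v j) : R) :=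
        Finset.sum_congr rfl fun j _ => (self_mul_sign (v j)).symm
    _ ≤ M := (le_abs_self _).trans (hv _ abs_sign_le_one)

theorem sum_abs_sum_smul_le [Fintype κ] {β : ι → R} {c : ι → κ → R} {η : R}
    (hc : ∀ j, β j ≠ 0 → ∑ k, |c j k| ≤ η) :
    ∑ k, |(∑ j, β j • c j) k| ≤ η * ∑ j, |β j| := by
  calc ∑ k, |(∑ j, β j • c j) k| ≤ ∑ k, ∑ j, |β j| * |c j k| := by
        gcongr with k
        simpa [abs_mul] using Finset.abs_sum_le_sum_abs (fun j => β j * c j k) Finset.univ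
    _ = ∑ j, |β j| * ∑ k, |c j k| := by
        rw [Finset.sum_comm]
        simp only [Finset.mul_sum]
    _ ≤ ∑ j, |β j| * η := by
        refine Finset.sum_le_sum fun j _ => ?_
        by_cases hj : β j = 0
        · simp [hj]
        · exact mul_le_mul_of_nonneg_left (hc j hj) (abs_nonneg _)
    _ = η * ∑ j, |β j| := by rw [← Finset.sum_mul, mul_comm]

variable [Fintype m]

theorem isIrrepresentable_of_isUnit_det_gram [DecidableEq ι] {X : Matrix m ι R} {A : Finset ι}
    {XA : Matrix m A R} (hXA : XA = X.submatrix id (↑)) (hdet : IsUnit (XAᵀ * XA).det) {η : R}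
    (hη : ∀ j ∉ A, ∀ τ : A → R, (∀ a, |τ a| ≤ 1) →
      |(X.col j ᵥ* XA) ⬝ᵥ ((XAᵀ * XA)⁻¹ *ᵥ τ)| ≤ η) :
    IsIrrepresentable X A η := by
  intro j hj
  set c : A → R := (X.col j ᵥ* XA) ᵥ* (XAᵀ * XA)⁻¹ with hc
  have mulVec_extend_c : X *ᵥ extend (↑) c 0 = XA *ᵥ c := by
    rw [mulVec_extend_zero X Subtype.val_injective, hXA]
  have residual_orthogonal : (X.col j - XA *ᵥ c) ᵥ* XA = 0 := by
    rw [sub_vecMul, ← vecMul_transpose, vecMul_vecMul, hc, vecMul_vecMul (X.col j ᵥ* XA),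
      nonsing_inv_mul _ hdet, vecMul_one, sub_self]
  refine ⟨extend (↑) c 0, support_subset_iff'.mpr fun k hk => ?_, fun a ha => ?_, ?_⟩
  · exact extend_apply' _ _ _ fun ⟨a, hak⟩ => hk (hak ▸ a.2)
  · rw [mulVec_extend_c]
    subst hXA
    exact congrFun residual_orthogonal ⟨a, ha⟩
  · rw [sum_abs_extend_zero Subtype.val_injective]
    refine sum_abs_le_of_forall_abs_dotProduct_le fun τ hτ => ?_
    rw [hc, ← dotProduct_mulVec]
    exact hη j hj τ hτ

theorem IsIrrepresentable.exists_mulVec_sub_vecMul_eq_zero {X : Matrix m ι R} {A : Set ι} {η : R}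
    (hX : IsIrrepresentable X A η) {β : ι → R} (hβ : support β ⊆ Aᶜ) :
    ∃ v : ι → R, support v ⊆ A ∧ (∀ a ∈ A, ((X *ᵥ (β - v)) ᵥ* X) a = 0) ∧
      ∑ k, |v k| ≤ η * ∑ j, |β j| := by
  choose! c c_support c_orthogonal c_sum_abs using hX
  have mulVec_sub_eq_sum : X *ᵥ (β - ∑ j, β j • c j) = ∑ j, β j • (X.col j - X *ᵥ c j) := by
    simp only [mulVec_sub, mulVec_sum, mulVec_smul, smul_sub, Finset.sum_sub_distrib]
    rw [mulVec_eq_sum]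
    simp only [op_smul_eq_smul]
    rfl
  refine ⟨∑ j, β j • c j, support_subset_iff'.mpr fun k hk => ?_, fun a ha => ?_,
    sum_abs_sum_smul_le fun j hj => c_sum_abs j (hβ hj)⟩
  · rw [Finset.sum_apply]
    refine Finset.sum_eq_zero fun j _ => ?_
    by_cases hj : β j = 0
    · rw [hj, zero_smul, Pi.zero_apply]
    · rw [Pi.smul_apply, support_subset_iff'.mp (c_support j (hβ hj)) k hk, smul_zero]
  · rw [mulVec_sub_eq_sum, sum_vecMul, Finset.sum_apply]
    refine Finset.sum_eq_zero fun j _ => ?_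
    rw [smul_vecMul, Pi.smul_apply]
    by_cases hj : β j = 0
    · rw [hj, zero_smul]
    · rw [c_orthogonal j (hβ hj) a ha, smul_zero]

end OrderedCommRing

section OrderedField

variable [Fintype m] [Field R] [LinearOrder R] [IsStrictOrderedRing R]

theorem lassoObjective_sub (X : Matrix m ι R) (y : m → R) (lam : R) (β d : ι → R) :
    lassoObjective X y lam (β - d) = lassoObjective X y lam β + (y - X *ᵥ β) ⬝ᵥ X *ᵥ d +
      1 / 2 * (X *ᵥ d ⬝ᵥ X *ᵥ d) + lam * (∑ j, |(β - d) j| - ∑ j, |β j|) := by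
  have residual_sub : y - X *ᵥ (β - d) = y - X *ᵥ β + X *ᵥ d := by
    rw [mulVec_sub]
    abel
  simp only [lassoObjective, residual_sub, add_dotProduct, dotProduct_add]
  rw [dotProduct_comm (X *ᵥ d) (y - X *ᵥ β)]
  ring

theorem IsIrrepresentable.exists_lassoObjective_sub_le {X : Matrix m ι R} {A : Set ι} {η : R}
    (hX : IsIrrepresentable X A η) {βstar : ι → R} (hβstar : support βstar ⊆ A) (ε : m → R)
    {lam : R} (hlam : 0 ≤ lam) (β : ι → R) :
    ∃ d : ι → R, ∑ j, |d j| ≤ (1 + η) * ∑ j, |Aᶜ.indicator β j| ∧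
      lassoObjective X (X *ᵥ βstar + ε) lam (β - d) ≤
        lassoObjective X (X *ᵥ βstar + ε) lam β + ε ⬝ᵥ X *ᵥ d -
          1 / 2 * (X *ᵥ d ⬝ᵥ X *ᵥ d) - lam * ((1 - η) * ∑ j, |Aᶜ.indicator β j|) := by
  obtain ⟨v, v_support, v_orthogonal, v_sum_abs⟩ :=
    hX.exists_mulVec_sub_vecMul_eq_zero (β := Aᶜ.indicator β) Set.support_indicator_subset
  have sub_eq : β - (Aᶜ.indicator β - v) = A.indicator β + v := by
    rw [Set.indicator_compl]
    abel
  have error_support : support (βstar - (β - (Aᶜ.indicator β - v))) ⊆ A := by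
    rw [sub_eq, support_subset_iff']
    intro j hj
    simp [support_subset_iff'.mp hβstar j hj, support_subset_iff'.mp v_support j hj, hj]
  have penalty_le : ∑ j, |(β - (Aᶜ.indicator β - v)) j| - ∑ j, |β j| ≤
      -((1 - η) * ∑ j, |Aᶜ.indicator β j|) := by
    have triangle : ∑ j, |(A.indicator β + v) j| ≤ ∑ j, |A.indicator β j| + ∑ j, |v j| := by
      rw [← Finset.sum_add_distrib]
      exact Finset.sum_le_sum fun j _ => abs_add_le _ _
    rw [sub_eq]
    linarith [sum_abs_indicator_add_sum_abs_indicator_compl A β]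
  refine ⟨Aᶜ.indicator β - v, ?_, ?_⟩
  · calc ∑ j, |(Aᶜ.indicator β - v) j| ≤ ∑ j, |Aᶜ.indicator β j| + ∑ j, |v j| := by
          rw [← Finset.sum_add_distrib]
          exact Finset.sum_le_sum fun j _ => abs_sub _ _
      _ ≤ (1 + η) * ∑ j, |Aᶜ.indicator β j| := by linarith
  · rw [lassoObjective_sub, residual_dotProduct_mulVec v_orthogonal error_support]
    linarith [mul_le_mul_of_nonneg_left penalty_le hlam]

theorem lasso_active_set_subset_of_irrepresentable_general {X : Matrix m ι R} {A : Set ι} {η : R}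
    (hη : η < 1) (hX : IsIrrepresentable X A η) {βstar : ι → R} (hβstar : support βstar ⊆ A)
    {ε : m → R} {lamε : R} (hε : ∀ j, |(ε ᵥ* X) j| ≤ lamε) {lam : R} (hlam : 0 < lam)
    (hlamε : lamε * (1 + η) / (1 - η) ≤ lam) {βhat : ι → R}
    (hmin : ∀ β, lassoObjective X (X *ᵥ βstar + ε) lam βhat ≤
      lassoObjective X (X *ᵥ βstar + ε) lam β) :
    ∀ j ∉ A, βhat j = 0 := by
  intro j hj
  obtain ⟨d, d_sum_abs, objective_le⟩ := hX.exists_lassoObjective_sub_le hβstar ε hlam.le βhat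
  set b := ∑ j, |Aᶜ.indicator βhat j| with hb
  have descent : 1 / 2 * (X *ᵥ d ⬝ᵥ X *ᵥ d) + lam * ((1 - η) * b) ≤ ε ⬝ᵥ X *ᵥ d := by
    linarith [hmin (βhat - d)]
  have b_nonneg : 0 ≤ b := Finset.sum_nonneg fun _ _ => abs_nonneg _
  have noise_le : ε ⬝ᵥ X *ᵥ d ≤ lam * ((1 - η) * b) := by
    have lamε_nonneg : 0 ≤ lamε := (abs_nonneg _).trans (hε j)
    calc ε ⬝ᵥ X *ᵥ d ≤ lamε * ∑ j, |d j| := by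
          rw [dotProduct_mulVec]
          exact (le_abs_self _).trans (abs_dotProduct_le_mul_sum_abs hε d)
      _ ≤ lamε * ((1 + η) * b) := by gcongr
      _ = lamε * (1 + η) * b := by ring
      _ ≤ lam * (1 - η) * b := by
          refine mul_le_mul_of_nonneg_right ?_ b_nonneg
          exact (div_le_iff₀ (sub_pos.mpr hη)).mp hlamε
      _ = lam * ((1 - η) * b) := by ring
  have mulVec_eq_zero : X *ᵥ d = 0 := by
    have sq_nonneg : 0 ≤ X *ᵥ d ⬝ᵥ X *ᵥ d := Finset.sum_nonneg fun _ _ => mul_self_nonneg _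
    exact dotProduct_self_eq_zero.mp (by linarith)
  have b_eq_zero : b = 0 := by
    rw [mulVec_eq_zero, dotProduct_zero, dotProduct_zero, mul_zero, zero_add] at descent
    by_contra b_ne_zero
    exact descent.not_gt <|
      mul_pos hlam (mul_pos (sub_pos.mpr hη) (b_nonneg.lt_of_ne' b_ne_zero))
  rw [hb, Finset.sum_eq_zero_iff_of_nonneg fun _ _ => abs_nonneg _] at b_eq_zero
  simpa [hj] using b_eq_zero j (Finset.mem_univ j)

end OrderedField

end Lasso

theorem lassoObjective_eq_sqnorm {n p : ℕ} (X : Matrix (Fin n) (Fin p) ℝ) (y : Fin n → ℝ)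
    (lam : ℝ) (β : Fin p → ℝ) :
    lassoObjective X y lam β =
      (1 / 2) * sqnorm (fun i => y i - ∑ j, β j * X i j) + lam * ∑ j, |β j| := by
  simp only [lassoObjective, sqnorm, dotProduct, Matrix.mulVec, Pi.sub_apply, sq, mul_comm (X _ _)]

/-- If the design satisfies the irrepresentable condition with constant `η < 1` relative to a
set `A₀` containing the support of `β*`, and `λ ≥ λ_ε (1+η)/(1−η)` where
`λ_ε = max_j |⟨ε, X_j⟩|`, then every Lasso minimizer at `λ` has its active set inside `A₀`. -/
theorem lasso_active_set_subset_of_irrepresentable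
    {n p : ℕ} (hp : 0 < p)
    (X : Matrix (Fin n) (Fin p) ℝ)
    (βstar : Fin p → ℝ) (A0 : Finset (Fin p))
    (hsupp : ∀ j, βstar j ≠ 0 → j ∈ A0)
    (ε : Fin n → ℝ)
    (y : Fin n → ℝ) (hy : y = fun i => (∑ j, βstar j * X i j) + ε i)
    (G : Matrix A0 A0 ℝ)
    (hG : G = fun a b => ip (fun i => X i a.1) (fun i => X i b.1))
    (hGinv : IsUnit G.det)
    (η : ℝ) (hη0 : 0 ≤ η) (hη1 : η < 1)
    (hirr : ∀ j ∉ A0, ∀ τ : A0 → ℝ, (∀ a, |τ a| ≤ 1) →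
      |∑ a : A0, ip (fun i => X i j) (fun i => X i a.1) * (G⁻¹).mulVec τ a| ≤ η)
    (lamε : ℝ)
    (hlamε : lamε = Finset.univ.sup'
      (⟨⟨0, hp⟩, Finset.mem_univ _⟩ : (Finset.univ : Finset (Fin p)).Nonempty)
      (fun j => |ip ε (fun i => X i j)|))
    (lam : ℝ) (hlam : 0 < lam) (hlam2 : lamε * (1 + η) / (1 - η) ≤ lam)
    (βhat : Fin p → ℝ)
    (hmin : ∀ β : Fin p → ℝ,
      (1 / 2) * sqnorm (fun i => y i - ∑ j, βhat j * X i j) + lam * ∑ j, |βhat j|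
        ≤ (1 / 2) * sqnorm (fun i => y i - ∑ j, β j * X i j) + lam * ∑ j, |β j|) :
    ∀ j ∉ A0, βhat j = 0 := by
  have irrepresentable : IsIrrepresentable X A0 η := by
    subst hG
    exact isIrrepresentable_of_isUnit_det_gram rfl hGinv hirr
  have noise_le (j : Fin p) : |ip ε (fun i => X i j)| ≤ lamε :=
    hlamε ▸ Finset.le_sup' (fun j => |ip ε (fun i => X i j)|) (Finset.mem_univ j)
  have y_eq : y = X.mulVec βstar + ε := by
    rw [hy]
    ext i
    simp only [Matrix.mulVec, dotProduct, Pi.add_apply, mul_comm]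
  simp only [← lassoObjective_eq_sqnorm, y_eq] at hmin
  exact lasso_active_set_subset_of_irrepresentable_general hη1 irrepresentable hsupp noise_le
    hlam hlam2 hmin
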